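/- arXiv:2512.14218 — 11 statements merged into one kernel-verified Lean document; each statement's English description precedes it below -/
import Mathlib

section
/- Let d ≥ 1, let C ∈ ℝ^{d×d×d} be the core tensor, and let A ∈ GL_d be an invertible d×d real matrix. If A*C = C under the matrix-tensor congruence action, then A = I_d, the d×d identity matrix. (In other words, the stabilizer of C under the congruence action of GL_d is trivial.) -/
/-!
The proof is by induction on `d`, splitting off the last index `ℓ`. Write `a` for the last row of
`A` and `B = A⁻¹`, and let `M b c = ∑ α, C α b c * a α` be the slice of `C` along `a`.

Since `C ℓ j k` is nonzero only for `j = k = ℓ`, the hypothesis reads `A * M * Aᵀ = E_{ℓℓ}`, so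
`M = B * E_{ℓℓ} * Bᵀ` is symmetric (`slice_eq`). As `C α ℓ b = 0` for `b < ℓ`, this gives
`M b ℓ = M ℓ b = 0`, which is the triangular system `6 * ∑ α < b, a α + 3 * a b = 0`. Hence
`a b = 0` for `b < ℓ`, and then the `(ℓ, ℓ, ℓ)` entry gives `a ℓ ^ 3 = 1`: the last row of `A` is
the last unit vector. Now the `(ℓ, i, i)` entry of the hypothesis says `A i ℓ ^ 2 = C ℓ i i = 0` for
`i < ℓ`. So `A` is block diagonal with last block `1`, and the upper block is again invertible and
fixes the core tensor of size `d - 1`.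
-/

open Matrix BigOperators

/-- The core tensor `C ∈ ℝ^{d×d×d}` (0-based indices). -/
def coreTensor (d : ℕ) : Fin d → Fin d → Fin d → ℝ := fun i j k =>
  if i = j ∧ j = k then 1
  else if (i < j ∧ j = k) ∨ (i = j ∧ j < k) then 3
  else if i < j ∧ j < k then 6
  else 0

/-- The matrix-tensor congruence action `A * T`. -/
noncomputable def congrAct {d : ℕ} (A : Matrix (Fin d) (Fin d) ℝ)
    (T : Fin d → Fin d → Fin d → ℝ) : Fin d → Fin d → Fin d → ℝ :=
  fun i j k => ∑ α, ∑ β, ∑ γ, T α β γ * A i α * A j β * A k γ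

lemma coreTensor_last (d : ℕ) (j k : Fin (d + 1)) :
    coreTensor (d + 1) (Fin.last d) j k =
      if j = Fin.last d then (if k = Fin.last d then 1 else 0) else 0 := by
  have hj := Fin.le_last j
  have hk := Fin.le_last k
  unfold coreTensor
  grind

lemma coreTensor_castSucc (d : ℕ) (i j k : Fin d) :
    coreTensor (d + 1) i.castSucc j.castSucc k.castSucc = coreTensor d i j k := by
  simp [coreTensor]

/-- The slice of the core tensor along the last row of `A` is the rank-one symmetric matrix built
from the last column of the inverse `B`. -/
lemma slice_eq (d : ℕ) (A B : Matrix (Fin (d + 1)) (Fin (d + 1)) ℝ) (hBA : B * A = 1)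
    (h : congrAct A (coreTensor (d + 1)) = coreTensor (d + 1)) (b c : Fin (d + 1)) :
    ∑ α, coreTensor (d + 1) α b c * A (Fin.last d) α = B b (Fin.last d) * B c (Fin.last d) := by
  let M : Matrix (Fin (d + 1)) (Fin (d + 1)) ℝ :=
    fun b c => ∑ α, coreTensor (d + 1) α b c * A (Fin.last d) α
  let N : Matrix (Fin (d + 1)) (Fin (d + 1)) ℝ :=
    fun j k => coreTensor (d + 1) (Fin.last d) j k
  have hM : ∀ b c, M b c = ∑ α, coreTensor (d + 1) α b c * A (Fin.last d) α := fun _ _ => rfl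
  have hN : ∀ j k, N j k = coreTensor (d + 1) (Fin.last d) j k := fun _ _ => rfl
  clear_value M N
  have h1 : A * M * Aᵀ = N := by
    ext j k
    have h2 := congrFun (congrFun (congrFun h (Fin.last d)) j) k
    rw [hN, ← h2]
    simp only [congrAct, Matrix.mul_apply, Matrix.transpose_apply, hM, Finset.sum_mul,
      Finset.mul_sum]
    rw [Finset.sum_comm]
    conv_rhs => rw [Finset.sum_comm]
    refine Finset.sum_congr rfl fun β _ => ?_
    conv_rhs => rw [Finset.sum_comm]
    refine Finset.sum_congr rfl fun γ _ => ?_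
    refine Finset.sum_congr rfl fun α _ => ?_
    ring
  have hM2 : M = B * N * Bᵀ := by
    have hT : Aᵀ * Bᵀ = 1 := by rw [← Matrix.transpose_mul, hBA, Matrix.transpose_one]
    calc M = (B * A) * M * (Aᵀ * Bᵀ) := by rw [hBA, hT, one_mul, mul_one]
      _ = B * (A * M * Aᵀ) * Bᵀ := by simp only [Matrix.mul_assoc]
      _ = B * N * Bᵀ := by rw [h1]
  rw [← hM, hM2]
  simp [Matrix.mul_apply, hN, coreTensor_last]

lemma last_row_eq_zero (d : ℕ) (A B : Matrix (Fin (d + 1)) (Fin (d + 1)) ℝ) (hBA : B * A = 1)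
    (h : congrAct A (coreTensor (d + 1)) = coreTensor (d + 1)) (b : Fin (d + 1))
    (hb : b < Fin.last d) : A (Fin.last d) b = 0 := by
  induction b using WellFoundedLT.induction with
  | _ b ih =>
    have h1 := slice_eq d A B hBA h b (Fin.last d)
    have h2 := slice_eq d A B hBA h (Fin.last d) b
    have h3 : ∑ α, coreTensor (d + 1) α (Fin.last d) b * A (Fin.last d) α = 0 := by
      refine Finset.sum_eq_zero fun α _ => ?_
      have : coreTensor (d + 1) α (Fin.last d) b = 0 := by
        have hα := Fin.le_last α
        unfold coreTensor
        grind
      rw [this, zero_mul]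
    have h4 : ∑ α, coreTensor (d + 1) α b (Fin.last d) * A (Fin.last d) α
        = 3 * A (Fin.last d) b := by
      rw [Finset.sum_eq_single b]
      · have : coreTensor (d + 1) b b (Fin.last d) = 3 := by
          unfold coreTensor
          grind
        rw [this]
      · intro α _ hα
        rcases lt_or_gt_of_ne hα with hlt | hgt
        · rw [ih α hlt (hlt.trans hb), mul_zero]
        · have : coreTensor (d + 1) α b (Fin.last d) = 0 := by
            unfold coreTensor
            grind
          rw [this, zero_mul]
      · simp
    linarith

/-- With the last row a multiple of the last unit vector, entries of `A * C` with first index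
`Fin.last d` collapse to a single term. -/
lemma congrAct_last (d : ℕ) (A : Matrix (Fin (d + 1)) (Fin (d + 1)) ℝ)
    (hrow : ∀ b, b < Fin.last d → A (Fin.last d) b = 0) (j k : Fin (d + 1)) :
    congrAct A (coreTensor (d + 1)) (Fin.last d) j k =
      A (Fin.last d) (Fin.last d) * A j (Fin.last d) * A k (Fin.last d) := by
  unfold congrAct
  rw [Finset.sum_eq_single (Fin.last d)]
  · simp [coreTensor_last]
  · intro α _ hα
    simp [hrow α (Fin.lt_last_iff_ne_last.mpr hα)]
  · simp

theorem stmt0 (d : ℕ) (hd : 1 ≤ d) (A : Matrix (Fin d) (Fin d) ℝ)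
    (hA : IsUnit A) (h : congrAct A (coreTensor d) = coreTensor d) :
    A = 1 := by
  clear hd
  induction d with
  | zero => exact Subsingleton.elim _ _
  | succ d ih =>
    obtain ⟨⟨A, B, hAB, hBA⟩, rfl⟩ := hA
    simp only at h ⊢
    have hrow := last_row_eq_zero d A B hBA h
    have hent : ∀ j k, A (Fin.last d) (Fin.last d) * A j (Fin.last d) * A k (Fin.last d) =
        coreTensor (d + 1) (Fin.last d) j k := fun j k => by
      rw [← congrAct_last d A hrow, h]
    have hll : A (Fin.last d) (Fin.last d) = 1 := by
      have h1 := hent (Fin.last d) (Fin.last d)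
      rw [coreTensor_last, if_pos rfl, if_pos rfl] at h1
      set t := A (Fin.last d) (Fin.last d)
      have h2 : (t - 1) * (t ^ 2 + t + 1) = 0 := by linear_combination h1
      rcases mul_eq_zero.mp h2 with h3 | h3
      · linarith
      · nlinarith [sq_nonneg (t + 1 / 2)]
    have hrow' : ∀ j : Fin d, A (Fin.last d) j.castSucc = 0 := fun j => hrow _ j.castSucc_lt_last
    have hcol : ∀ i : Fin d, A i.castSucc (Fin.last d) = 0 := by
      intro i
      have h1 := hent i.castSucc i.castSucc
      rw [coreTensor_last, if_neg i.castSucc_lt_last.ne, hll, one_mul] at h1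
      exact mul_self_eq_zero.mp h1
    have hsub : (A.submatrix Fin.castSucc Fin.castSucc : Matrix (Fin d) (Fin d) ℝ) = 1 := by
      apply ih
      · have hinv : A.submatrix Fin.castSucc Fin.castSucc *
            B.submatrix Fin.castSucc Fin.castSucc = (1 : Matrix (Fin d) (Fin d) ℝ) := by
          ext i j
          have h1 := congrFun (congrFun hAB i.castSucc) j.castSucc
          rw [Matrix.mul_apply, Fin.sum_univ_castSucc, hcol, zero_mul, add_zero] at h1
          simpa [Matrix.mul_apply, Matrix.one_apply] using h1
        exact IsUnit.of_mul_eq_one _ hinv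
      · funext i j k
        have h1 := congrFun (congrFun (congrFun h i.castSucc) j.castSucc) k.castSucc
        rw [coreTensor_castSucc] at h1
        rw [← h1]
        simp [congrAct, Fin.sum_univ_castSucc, hcol, coreTensor_castSucc]
    ext i j
    induction i using Fin.lastCases with
    | last =>
      induction j using Fin.lastCases with
      | last => simp [hll]
      | cast j => rw [hrow', Matrix.one_apply_ne j.castSucc_lt_last.ne']
    | cast i =>
      induction j using Fin.lastCases with
      | last => rw [hcol, Matrix.one_apply_ne i.castSucc_lt_last.ne]
      | cast j =>
        have h1 := congrFun (congrFun hsub i) j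
        simpa [Matrix.one_apply] using h1
end

section
/- Let d ≥ 1 and let C ∈ ℝ^{d×d×d} be the core tensor. For every tensor G in the orbit GL_d*C = {A*C : A ∈ GL_d}, there exists a unique invertible matrix A ∈ GL_d such that G = A*C. -/
/-!
Acting with `B⁻¹` reduces uniqueness to the triviality of the stabilizer of the core tensor `C`:
if `M * C = C` with `M` invertible, then `M = 1`.

For a vector `y`, contract the middle index of `C` with `y`. The resulting matrix `S(y)` is upper
triangular with diagonal `y`, so its determinant is `∏ i, y i`. Invariance of `C` gives
`M * S(Mᵀ y) * Mᵀ = S(y)`, whence `Mᵀ` maps vectors without zero coordinates to vectors without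
zero coordinates (`stab_vecMul_ne_zero`). This forces every column of `M` to have at most one
nonzero entry (`at_most_one_nonzero`), so `M` is a monomial matrix, given by a permutation `σ` and
coefficients `c`. The entries `C α α α = 1` give `c α ^ 3 = 1`, so `c α = 1`, and the
entries `C α β β`, equal to `3` exactly when `α < β`, show that `σ` is strictly increasing, hence
the identity.
-/

open Matrix BigOperators

lemma congrAct_mul {d : ℕ} (A B : Matrix (Fin d) (Fin d) ℝ) (T : Fin d → Fin d → Fin d → ℝ) :
    congrAct (A * B) T = congrAct A (congrAct B T) := by
  funext i j k
  simp only [congrAct, Matrix.mul_apply, Finset.sum_mul, Finset.mul_sum]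
  simp only [← Fintype.sum_prod_type']
  refine Fintype.sum_equiv
    { toFun := fun (α, β, γ, r, q, p) => (p, q, r, α, β, γ)
      invFun := fun (p, q, r, α, β, γ) => (α, β, γ, r, q, p)
      left_inv := fun _ => rfl
      right_inv := fun _ => rfl } _ _ ?_
  intro x
  simp only [Equiv.coe_fn_mk]
  ring

lemma congrAct_one {d : ℕ} (T : Fin d → Fin d → Fin d → ℝ) : congrAct 1 T = T := by
  funext i j k
  simp [congrAct, Matrix.one_apply]

/-- The matrix obtained from `T` by contracting its middle index with `y`. -/
noncomputable def midSlice {d : ℕ} (T : Fin d → Fin d → Fin d → ℝ) (y : Fin d → ℝ) :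
    Matrix (Fin d) (Fin d) ℝ := Matrix.of fun i k => ∑ j, T i j k * y j

lemma midSlice_congrAct {d : ℕ} (M : Matrix (Fin d) (Fin d) ℝ) (T : Fin d → Fin d → Fin d → ℝ)
    (y : Fin d → ℝ) :
    midSlice (congrAct M T) y = M * midSlice T (y ᵥ* M) * Mᵀ := by
  ext i k
  simp only [midSlice, congrAct, Matrix.mul_apply, Matrix.of_apply, Matrix.transpose_apply,
    Matrix.vecMul, dotProduct, Finset.sum_mul, Finset.mul_sum]
  simp only [← Fintype.sum_prod_type']
  refine Fintype.sum_equiv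
    { toFun := fun (q, α, β, γ) => (γ, α, β, q)
      invFun := fun (γ, α, β, q) => (q, α, β, γ)
      left_inv := fun _ => rfl
      right_inv := fun _ => rfl } _ _ ?_
  intro x
  simp only [Equiv.coe_fn_mk]
  ring

lemma det_midSlice_core {d : ℕ} (y : Fin d → ℝ) :
    (midSlice (coreTensor d) y).det = ∏ i, y i := by
  rw [Matrix.det_of_isUpperTriangular]
  · refine Finset.prod_congr rfl fun i _ => ?_
    rw [midSlice, Matrix.of_apply, Finset.sum_eq_single i]
    · simp [coreTensor]
    · intro j _ hj
      have : coreTensor d i j i = 0 := by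
        unfold coreTensor
        split_ifs <;> first | rfl | (exfalso; grind)
      rw [this, zero_mul]
    · simp
  · intro i k hik
    have hik : k < i := hik
    rw [midSlice, Matrix.of_apply]
    refine Finset.sum_eq_zero fun j _ => ?_
    have : coreTensor d i j k = 0 := by
      unfold coreTensor
      split_ifs <;> first | rfl | (exfalso; grind)
    rw [this, zero_mul]

lemma stab_vecMul_ne_zero {d : ℕ} {M : Matrix (Fin d) (Fin d) ℝ}
    (h : congrAct M (coreTensor d) = coreTensor d) {y : Fin d → ℝ} (hy : ∀ i, y i ≠ 0)
    (i : Fin d) : (y ᵥ* M) i ≠ 0 := by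
  have h1 := congrArg Matrix.det (midSlice_congrAct M (coreTensor d) y)
  rw [h, Matrix.det_mul, Matrix.det_mul, det_midSlice_core, det_midSlice_core] at h1
  intro h0
  rw [Finset.prod_eq_zero (Finset.mem_univ i) h0] at h1
  have : ∏ i, y i ≠ 0 := Finset.prod_ne_zero_iff.2 fun i _ => hy i
  exact this (by simpa using h1)

/-- A linear form without zeros on vectors having all coordinates nonzero has at most one nonzero
coefficient. -/
lemma at_most_one_nonzero {d : ℕ} {r : Fin d → ℝ}
    (h : ∀ y : Fin d → ℝ, (∀ i, y i ≠ 0) → ∑ i, y i * r i ≠ 0) {a b : Fin d}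
    (ha : r a ≠ 0) (hb : r b ≠ 0) : a = b := by
  by_contra hab
  -- With all other coordinates equal to `1`, choose `y b = t ≠ 0` so that solving for `y a`
  -- yields a nonzero value.
  set S := ∑ i ∈ (Finset.univ.erase a).erase b, r i with hS
  obtain ⟨t, ht⟩ := Set.Infinite.nonempty
    ((Set.toFinite ({0, -S / r b} : Set ℝ)).infinite_compl)
  simp only [Set.mem_compl_iff, Set.mem_insert_iff, Set.mem_singleton_iff, not_or] at ht
  obtain ⟨ht0, ht1⟩ := ht
  have hne : S + r b * t ≠ 0 := by
    intro h0
    apply ht1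
    field_simp
    linarith
  let y : Fin d → ℝ := fun i => if i = a then -(S + r b * t) / r a else if i = b then t else 1
  refine h y ?_ ?_
  · intro i
    simp only [y]
    split_ifs
    · exact div_ne_zero (neg_ne_zero.2 hne) ha
    · exact ht0
    · exact one_ne_zero
  · have hb' : b ∈ Finset.univ.erase a := by simp [Ne.symm hab]
    rw [← Finset.add_sum_erase _ _ (Finset.mem_univ a), ← Finset.add_sum_erase _ _ hb']
    have : ∑ i ∈ (Finset.univ.erase a).erase b, y i * r i = S := by
      rw [hS]
      refine Finset.sum_congr rfl fun i hi => ?_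
      simp only [Finset.mem_erase, Finset.mem_univ, and_true] at hi
      simp [y, hi.1, hi.2]
    rw [this]
    simp only [y, if_true, if_neg (Ne.symm hab)]
    field_simp
    ring

/-- The stabilizer of the core tensor is trivial. -/
lemma stab_core {d : ℕ} {M : Matrix (Fin d) (Fin d) ℝ} (hM : IsUnit M)
    (h : congrAct M (coreTensor d) = coreTensor d) : M = 1 := by
  have hdet : M.det ≠ 0 := ((Matrix.isUnit_iff_isUnit_det M).1 hM).ne_zero
  have hcol : ∀ α, ∃ i, M i α ≠ 0 := by
    intro α
    by_contra! h0
    exact hdet (Matrix.det_eq_zero_of_column_eq_zero α h0)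
  have hrow : ∀ i, ∃ α, M i α ≠ 0 := by
    intro i
    by_contra! h0
    exact hdet (Matrix.det_eq_zero_of_row_eq_zero i h0)
  choose σ hσ using hcol
  have huniq : ∀ i α, M i α ≠ 0 → i = σ α := fun i α hi =>
    at_most_one_nonzero (r := fun j => M j α) (fun y hy => stab_vecMul_ne_zero h hy α) hi (hσ α)
  have hsurj : Function.Surjective σ := fun i => by
    obtain ⟨α, hα⟩ := hrow i
    exact ⟨α, (huniq i α hα).symm⟩
  have hinj : Function.Injective σ := Finite.injective_iff_surjective.2 hsurj
  have hzero : ∀ α β, β ≠ α → M (σ α) β = 0 := by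
    intro α β hne
    by_contra h0
    exact hne (hinj (huniq _ _ h0)).symm
  have key : ∀ α β γ, coreTensor d α β γ * M (σ α) α * M (σ β) β * M (σ γ) γ
      = coreTensor d (σ α) (σ β) (σ γ) := by
    intro α β γ
    have h1 := congrFun (congrFun (congrFun h (σ α)) (σ β)) (σ γ)
    rw [← h1, congrAct, Finset.sum_eq_single α, Finset.sum_eq_single β, Finset.sum_eq_single γ]
    · intro x _ hx; simp [hzero γ x hx]
    · simp
    · intro x _ hx; simp [hzero β x hx]
    · simp
    · intro x _ hx; simp [hzero α x hx]
    · simp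
  have hc : ∀ α, M (σ α) α = 1 := by
    intro α
    have h1 := key α α α
    simp only [coreTensor, and_self, if_true, one_mul] at h1
    have h2 : (M (σ α) α) ^ 3 = 1 ^ 3 := by linear_combination h1
    exact (by decide : Odd 3).pow_inj.1 h2
  have hmono : StrictMono σ := by
    intro α β hαβ
    have h1 := key α β β
    rw [hc, hc, mul_one, mul_one, mul_one] at h1
    by_contra hlt
    have hne : σ α ≠ σ β := fun e => hαβ.ne (hinj e)
    simp [coreTensor, hαβ, hαβ.ne, hlt, hne] at h1
  have hid : σ = id :=
    (hmono.range_inj strictMono_id).1 (by rw [hsurj.range_eq, Set.range_id])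
  ext i α
  by_cases hi : i = α
  · subst hi
    simpa [hid] using hc i
  · rw [Matrix.one_apply_ne hi]
    have := hzero i α (Ne.symm hi)
    simpa [hid] using this

theorem stmt1 (d : ℕ) (hd : 1 ≤ d) (G : Fin d → Fin d → Fin d → ℝ)
    (hG : ∃ A : Matrix (Fin d) (Fin d) ℝ, IsUnit A ∧ G = congrAct A (coreTensor d)) :
    ∃! A : Matrix (Fin d) (Fin d) ℝ, IsUnit A ∧ G = congrAct A (coreTensor d) := by
  obtain ⟨B, hB, hGB⟩ := hG
  refine ⟨B, ⟨hB, hGB⟩, ?_⟩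
  rintro A ⟨hA, hGA⟩
  have hBd := (Matrix.isUnit_iff_isUnit_det B).1 hB
  have hM : IsUnit (B⁻¹ * A) := ((Matrix.isUnit_nonsing_inv_iff).2 hB).mul hA
  have h1 : congrAct (B⁻¹ * A) (coreTensor d) = coreTensor d := by
    rw [congrAct_mul, ← hGA, hGB, ← congrAct_mul, Matrix.nonsing_inv_mul B hBd, congrAct_one]
  have h2 := stab_core hM h1
  calc A = B * (B⁻¹ * A) := by rw [← mul_assoc, Matrix.mul_nonsing_inv B hBd, one_mul]
    _ = B := by rw [h2, mul_one]
end

section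
/- Let d ≥ 1, let C ∈ ℝ^{d×d×d} be the core tensor, let G ∈ GL_d*C, and let 1 ≤ s ≤ d. Then the following are equivalent: (i) G_{ijk} = C_{ijk} for all indices 1 ≤ i,j,k ≤ d such that (i = j = k ≤ s) or (k ≤ min(s, i−1, j)) or (j ≤ min(s, i−1, k)); (ii) G lies in the orbit (I_s ⊕ GL_{d−s})*C. -/
/-!
If `G = A * C` with `A` invertible, then the entrywise condition already forces `A` to lie in
`I_s ⊕ GL_{d-s}`. This is shown one index at a time: suppose the rows and columns of `A` of index
`< t` are those of the identity, with `t < s`, and let `a` be row `t` of `A`.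
Contracting `C` with `a` in its third, respectively second, slot gives upper triangular matrices
`X` and `Y`. The entrywise condition makes every row `i > t` of `A X Aᵀ` and `A Y Aᵀ` vanish, so the rows
`≥ t` of `X` and `Y` are the multiples of a single row, the row `α` having as coefficient the entry
`(A⁻¹) α t` (`rank_one_below`). Hence, for `t ≤ α < β`,
`Y α α * Y β β = Y α β * Y β α = 0`; as `Y α α = a α`, at most one entry `a m` is nonzero.
If `t < m`, the same minor of `X` gives `X t t * X m m = 3 (a m)² = 0`, a contradiction.
So `a = a t • e_t`, and `(a t)³ = G t t t = 1` gives `a t = 1`. Finally `X α t = 0` for `α > t` shows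
that column `t` of `A⁻¹`, and therefore that of `A`, is `e_t` (`row_col_step`).

For the converse, the prescribed diagonal entries involve only rows of the identity, and the other
prescribed entries vanish for both tensors, `C` being supported on indices `α ≤ β ≤ γ`
(`coreTensor_eq_zero`).
-/

open Matrix BigOperators

/-- Membership in `I_s ⊕ GL_{d-s}`: an invertible matrix whose rows and columns
with (0-based) index `< s` agree with the identity matrix. -/
def IsBlockIdGL (d s : ℕ) (A : Matrix (Fin d) (Fin d) ℝ) : Prop :=
  IsUnit A ∧ ∀ i j : Fin d, ((i : ℕ) < s ∨ (j : ℕ) < s) →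
    A i j = if i = j then 1 else 0

/-- The core tensor is supported on weakly increasing index triples. -/
lemma coreTensor_eq_zero {d : ℕ} {i j k : Fin d} (h : j < i ∨ k < j) :
    coreTensor d i j k = 0 := by
  unfold coreTensor
  split_ifs <;> first | rfl | (exfalso; omega)

lemma coreTensor_diag {d : ℕ} (i : Fin d) : coreTensor d i i i = 1 := by
  simp [coreTensor]

lemma coreTensor_self_lt {d : ℕ} {i k : Fin d} (h : i < k) : coreTensor d i i k = 3 := by
  simp [coreTensor, h, h.ne]

/-- If the columns of `A` of index `< t` are those of the identity and the rows `> t` of `A X Aᵀ`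
vanish, then all rows `≥ t` of `X` are multiples of one row, with coefficients read off from
column `t` of `A⁻¹`. -/
lemma rank_one_below {d : ℕ} {A : Matrix (Fin d) (Fin d) ℝ} (hA : IsUnit A) (t : Fin d)
    (hcol : ∀ i j : Fin d, j < t → A i j = if i = j then 1 else 0)
    (X : Matrix (Fin d) (Fin d) ℝ)
    (hX : ∀ i j : Fin d, t < i → (A * X * Aᵀ) i j = 0) (α β : Fin d) (hα : t ≤ α) :
    X α β = A⁻¹ α t * (A * X) t β := by
  have hdet : IsUnit A.det := (Matrix.isUnit_iff_isUnit_det A).1 hA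
  have hdetT : IsUnit Aᵀ.det := by rwa [Matrix.det_transpose]
  have hrow : ∀ i j : Fin d, t < i → (A * X) i j = 0 := by
    intro i j hi
    have h : A * X = (A * X * Aᵀ) * (Aᵀ)⁻¹ := by
      rw [Matrix.mul_assoc (A * X), Matrix.mul_nonsing_inv _ hdetT, Matrix.mul_one]
    rw [h, Matrix.mul_apply]
    exact Finset.sum_eq_zero fun k _ => by rw [hX i k hi, zero_mul]
  have hinv : ∀ i : Fin d, i < t → A⁻¹ α i = 0 := by
    intro i hi
    have h := congrFun (congrFun (Matrix.nonsing_inv_mul A hdet) α) i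
    rw [Matrix.mul_apply] at h
    simp only [hcol _ i hi, mul_ite, mul_one, mul_zero, Finset.sum_ite_eq', Finset.mem_univ,
      if_true] at h
    rw [h, Matrix.one_apply_ne (by omega)]
  have h : X = A⁻¹ * (A * X) := by
    rw [← Matrix.mul_assoc, Matrix.nonsing_inv_mul _ hdet, Matrix.one_mul]
  conv_lhs => rw [h]
  rw [Matrix.mul_apply]
  refine Finset.sum_eq_single t (fun i _ hi => ?_) (by simp)
  rcases lt_or_gt_of_ne hi with hi | hi
  · rw [hinv i hi, zero_mul]
  · rw [hrow i β hi, mul_zero]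

lemma sandwich_apply {d : ℕ} (A X : Matrix (Fin d) (Fin d) ℝ) (i j : Fin d) :
    (A * X * Aᵀ) i j = ∑ α, ∑ β, A i α * X α β * A j β := by
  simp only [Matrix.mul_apply, Matrix.transpose_apply, Finset.sum_mul]
  exact Finset.sum_comm

/-- The inductive step: once the rows and columns of `A` of index `< t` are those of the identity,
the entries of `A * C` at level `t` force row and column `t` to be those of the identity. -/
lemma row_col_step {d : ℕ} {A : Matrix (Fin d) (Fin d) ℝ} (hA : IsUnit A) (t : Fin d)
    (hid : ∀ i j : Fin d, i < t ∨ j < t → A i j = if i = j then 1 else 0)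
    (h1 : congrAct A (coreTensor d) t t t = 1)
    (h2 : ∀ i j : Fin d, t < i → congrAct A (coreTensor d) i j t = 0)
    (h3 : ∀ i k : Fin d, t < i → congrAct A (coreTensor d) i t k = 0) :
    ∀ j, A t j = (if t = j then 1 else 0) ∧ A j t = if j = t then 1 else 0 := by
  have hdet : IsUnit A.det := (Matrix.isUnit_iff_isUnit_det A).1 hA
  -- The contractions of the core tensor with row `t` in the third and in the second slot.
  let X : Matrix (Fin d) (Fin d) ℝ := fun α β => ∑ γ, coreTensor d α β γ * A t γ
  let Y : Matrix (Fin d) (Fin d) ℝ := fun α γ => ∑ β, coreTensor d α β γ * A t β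
  have hX : ∀ i j, (A * X * Aᵀ) i j = congrAct A (coreTensor d) i j t := by
    intro i j
    rw [sandwich_apply]
    simp only [congrAct, X, Finset.mul_sum, Finset.sum_mul]
    exact Finset.sum_congr rfl fun α _ => Finset.sum_congr rfl fun β _ =>
      Finset.sum_congr rfl fun γ _ => by ring
  have hY : ∀ i k, (A * Y * Aᵀ) i k = congrAct A (coreTensor d) i t k := by
    intro i k
    rw [sandwich_apply]
    simp only [congrAct, Y, Finset.mul_sum, Finset.sum_mul]
    refine Finset.sum_congr rfl fun α _ => ?_
    rw [Finset.sum_comm]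
    exact Finset.sum_congr rfl fun β _ => Finset.sum_congr rfl fun γ _ => by ring
  have hcol : ∀ i j : Fin d, j < t → A i j = if i = j then 1 else 0 :=
    fun i j hj => hid i j (Or.inr hj)
  have rX := rank_one_below hA t hcol X (fun i j hi => (hX i j).trans (h2 i j hi))
  have rY := rank_one_below hA t hcol Y (fun i j hi => (hY i j).trans (h3 i j hi))
  have low : ∀ j : Fin d, j < t → A t j = 0 := fun j hj => by
    rw [hid t j (Or.inr hj), if_neg hj.ne']
  have Ytri : ∀ α γ : Fin d, γ < α → Y α γ = 0 := fun α γ h =>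
    Finset.sum_eq_zero fun β _ => by
      rw [coreTensor_eq_zero (by omega), zero_mul]
  have Xtri : ∀ α β : Fin d, β < α → X α β = 0 := fun α β h =>
    Finset.sum_eq_zero fun γ _ => by
      rw [coreTensor_eq_zero (Or.inl h), zero_mul]
  have Ydiag : ∀ α : Fin d, Y α α = A t α := by
    intro α
    refine (Finset.sum_eq_single α (fun β _ hβ => ?_) (by simp)).trans ?_
    · rw [coreTensor_eq_zero (by omega), zero_mul]
    · rw [coreTensor_diag, one_mul]
  have minorY : ∀ α β : Fin d, t ≤ α → α < β → A t α * A t β = 0 := by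
    intro α β hα hαβ
    have e : Y α α * Y β β = Y α β * Y β α := by
      rw [rY α α hα, rY β β (hα.trans hαβ.le), rY α β hα, rY β α (hα.trans hαβ.le)]; ring
    rwa [Ytri β α hαβ, mul_zero, Ydiag, Ydiag] at e
  have single : ∀ m n : Fin d, A t m ≠ 0 → n ≠ m → A t n = 0 := by
    intro m n hm hn
    by_contra hn0
    have hm' : t ≤ m := not_lt.1 fun h => hm (low m h)
    have hn' : t ≤ n := not_lt.1 fun h => hn0 (low n h)
    rcases lt_or_gt_of_ne hn with h | h
    · exact mul_ne_zero hn0 hm (minorY n m hn' h)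
    · exact mul_ne_zero hm hn0 (minorY m n hm' h)
  have Xval : ∀ m α β : Fin d, A t m ≠ 0 → X α β = coreTensor d α β m * A t m :=
    fun m α β hm => Finset.sum_eq_single m
      (fun γ _ hγ => by rw [single m γ hm hγ, mul_zero]) (by simp)
  have above : ∀ m : Fin d, t < m → A t m = 0 := by
    intro m htm
    by_contra hm
    have e : X t t * X m m = X t m * X m t := by
      rw [rX t t le_rfl, rX m m htm.le, rX t m le_rfl, rX m t htm.le]; ring
    rw [Xtri m t htm, mul_zero, Xval m t t hm, Xval m m m hm, coreTensor_self_lt htm,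
      coreTensor_diag] at e
    have : A t m * A t m ≠ 0 := mul_ne_zero hm hm
    apply this
    linarith
  have off : ∀ j : Fin d, j ≠ t → A t j = 0 := fun j hj =>
    (lt_or_gt_of_ne hj).elim (low j) (above j)
  have cube : congrAct A (coreTensor d) t t t = A t t ^ 3 := by
    unfold congrAct
    rw [Finset.sum_eq_single t _ (by simp), Finset.sum_eq_single t _ (by simp),
      Finset.sum_eq_single t _ (by simp), coreTensor_diag]
    · ring
    · intro γ _ h; rw [off γ h, mul_zero]
    · intro β _ h; simp [off β h]
    · intro α _ h; simp [off α h]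
  have att : A t t = 1 := by
    have e : A t t ^ 3 = 1 := cube.symm.trans h1
    nlinarith [sq_nonneg (A t t + 1), sq_nonneg (A t t), sq_nonneg (A t t - 1)]
  have hXtt : X t t = 1 := by
    rw [Xval t t t (by rw [att]; exact one_ne_zero), coreTensor_diag, att, one_mul]
  have hv : (A * X) t t ≠ 0 := by
    intro h
    have := rX t t le_rfl
    rw [h, mul_zero, hXtt] at this
    exact one_ne_zero this
  have hbhi : ∀ α : Fin d, t < α → A⁻¹ α t = 0 := by
    intro α hα
    have := rX α t hα.le
    rw [Xtri α t hα] at this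
    exact (mul_eq_zero.1 this.symm).resolve_right hv
  have hAb : ∀ i : Fin d, ∑ α, A i α * A⁻¹ α t = (1 : Matrix (Fin d) (Fin d) ℝ) i t := by
    intro i
    rw [← Matrix.mul_apply, Matrix.mul_nonsing_inv A hdet]
  have hblo : ∀ α : Fin d, α < t → A⁻¹ α t = 0 := by
    intro α hα
    have := hAb α
    simpa [hid α _ (Or.inl hα), Matrix.one_apply_ne hα.ne] using this
  have hcolt : ∀ i : Fin d, A i t * A⁻¹ t t = (1 : Matrix (Fin d) (Fin d) ℝ) i t := by
    intro i
    rw [← hAb i]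
    symm
    refine Finset.sum_eq_single t (fun α _ h => ?_) (by simp)
    rw [(lt_or_gt_of_ne h).elim (hblo α) (hbhi α), mul_zero]
  have hbt : A⁻¹ t t = 1 := by simpa [att] using hcolt t
  intro j
  constructor
  · split_ifs with h
    · rw [← h, att]
    · exact off j (Ne.symm h)
  · simpa [hbt, Matrix.one_apply] using hcolt j

theorem stmt2 (d s : ℕ) (hs : 1 ≤ s) (hsd : s ≤ d)
    (G : Fin d → Fin d → Fin d → ℝ)
    (hG : ∃ A : Matrix (Fin d) (Fin d) ℝ, IsUnit A ∧ G = congrAct A (coreTensor d)) :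
    (∀ i j k : Fin d,
        ((i = j ∧ j = k ∧ (i : ℕ) < s) ∨
         ((k : ℕ) < s ∧ (k : ℕ) < (i : ℕ) ∧ (k : ℕ) ≤ (j : ℕ)) ∨
         ((j : ℕ) < s ∧ (j : ℕ) < (i : ℕ) ∧ (j : ℕ) ≤ (k : ℕ))) →
        G i j k = coreTensor d i j k)
      ↔ ∃ A : Matrix (Fin d) (Fin d) ℝ,
          IsBlockIdGL d s A ∧ G = congrAct A (coreTensor d) := by
  constructor
  · intro h
    obtain ⟨A, hA, rfl⟩ := hG
    refine ⟨A, ⟨hA, ?_⟩, rfl⟩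
    have key : ∀ t : ℕ, t ≤ s → ∀ i j : Fin d, ((i : ℕ) < t ∨ (j : ℕ) < t) →
        A i j = if i = j then 1 else 0 := by
      intro t
      induction t with
      | zero => intro _ i j hij; omega
      | succ t ih =>
        intro ht i j hij
        have ih := ih (by omega)
        -- Entries `(i, j, t)` with `t < i` fall under the second or third clause according
        -- to whether `t ≤ j` or `j < t`; likewise for entries `(i, t, k)`.
        have hstep := row_col_step hA ⟨t, by omega⟩ (fun i j hij => ih i j hij)
          ((h ⟨t, by omega⟩ _ _ (Or.inl ⟨rfl, rfl, ht⟩)).trans (coreTensor_diag _))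
          (fun i j hi => by
            have hi' : t < (i : ℕ) := hi
            rw [h i j _ (by
              simp only
              rcases le_or_gt t (j : ℕ) with hj | hj
              · exact Or.inr (Or.inl ⟨ht, hi', hj⟩)
              · exact Or.inr (Or.inr ⟨by omega, by omega, hj.le⟩))]
            refine coreTensor_eq_zero ?_
            simp only [Fin.lt_def]
            omega)
          (fun i k hi => by
            have hi' : t < (i : ℕ) := hi
            rw [h i _ k (by
              simp only
              rcases le_or_gt t (k : ℕ) with hk | hk
              · exact Or.inr (Or.inr ⟨ht, hi', hk⟩)
              · exact Or.inr (Or.inl ⟨by omega, by omega, hk.le⟩))]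
            exact coreTensor_eq_zero (Or.inl hi))
        by_cases hlt : (i : ℕ) < t ∨ (j : ℕ) < t
        · exact ih i j hlt
        · have hij' : i = ⟨t, by omega⟩ ∨ j = ⟨t, by omega⟩ := by
            simp only [Fin.ext_iff]; omega
          rcases hij' with h | h
          · rw [h]; exact (hstep j).1
          · rw [h]; exact (hstep i).2
    exact key s le_rfl
  · rintro ⟨A, ⟨-, hA⟩, rfl⟩ i j k hijk
    have hrow : ∀ (i j : Fin d), (i : ℕ) < s → i ≠ j → A i j = 0 := fun i j hi hij => by
      rw [hA i j (Or.inl hi), if_neg hij]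
    have hcol : ∀ (i j : Fin d), (j : ℕ) < s → i ≠ j → A i j = 0 := fun i j hj hij => by
      rw [hA i j (Or.inr hj), if_neg hij]
    rcases hijk with ⟨rfl, rfl, hi⟩ | hk | hj
    · unfold congrAct
      rw [Finset.sum_eq_single i _ (by simp), Finset.sum_eq_single i _ (by simp),
        Finset.sum_eq_single i _ (by simp), hA i i (Or.inl hi)]
      · simp
      · intro γ _ h; rw [hrow i γ hi h.symm, mul_zero]
      · intro β _ h; simp [hrow i β hi h.symm]
      · intro α _ h; simp [hrow i α hi h.symm]
    · rw [coreTensor_eq_zero (i := i) (j := j) (k := k) (by omega)]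
      refine Finset.sum_eq_zero fun α _ => Finset.sum_eq_zero fun β _ =>
        Finset.sum_eq_zero fun γ _ => ?_
      by_cases hγ : k = γ
      · subst hγ
        by_cases hz : β < α ∨ k < β
        · rw [coreTensor_eq_zero hz]; ring
        · rw [hcol i α (by omega) (by omega)]; ring
      · rw [hrow k γ hk.1 hγ]; ring
    · rw [coreTensor_eq_zero (i := i) (j := j) (k := k) (by omega)]
      refine Finset.sum_eq_zero fun α _ => Finset.sum_eq_zero fun β _ =>
        Finset.sum_eq_zero fun γ _ => ?_
      by_cases hβ : j = β
      · subst hβ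
        by_cases hz : j < α
        · rw [coreTensor_eq_zero (Or.inl hz)]; ring
        · rw [hcol i α (by omega) (by omega)]; ring
      · rw [hrow j β hj.1 hβ]; ring
end

section
/- Let d ≥ 1, 0 ≤ s ≤ d, and let C ∈ ℝ^{d×d×d} be the core tensor. If G ∈ (I_s ⊕ GL_{d−s})*C, then G_{ijk} = C_{ijk} for all indices with j ≤ min(s, i−1) and 1 ≤ k ≤ d. -/
/-!
Both sides vanish. The core tensor satisfies `C α β γ = 0` for `β < α`, so the right-hand side
is zero because `j < i`. In the sum defining `(A * C) i j k`, row `j < s` of `A` is a unit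
vector, so only `β = j` contributes; then `C α j γ ≠ 0` forces `α ≤ j < s`, and since column `α`
of `A` is a unit vector and `α ≤ j < i`, the factor `A i α` is zero.
-/

open Matrix BigOperators

theorem stmt5 (d s : ℕ) (hd : 1 ≤ d) (hsd : s ≤ d)
    (G : Fin d → Fin d → Fin d → ℝ)
    (hG : ∃ A : Matrix (Fin d) (Fin d) ℝ,
      IsBlockIdGL d s A ∧ G = congrAct A (coreTensor d)) :
    ∀ i j k : Fin d, (j : ℕ) < s → (j : ℕ) < (i : ℕ) →
      G i j k = coreTensor d i j k := by
  obtain ⟨A, ⟨-, hA⟩, rfl⟩ := hG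
  intro i j k hjs hji
  -- `C` vanishes whenever its second index lies strictly below its first.
  have hC : ∀ α β γ : Fin d, β < α → coreTensor d α β γ = 0 := by
    intro α β γ h
    have h1 : α ≠ β := h.ne'
    have h2 : ¬ α < β := h.not_gt
    simp [coreTensor, h1, h2]
  rw [hC i j k hji]
  unfold congrAct
  refine Finset.sum_eq_zero fun α _ => Finset.sum_eq_zero fun β _ =>
    Finset.sum_eq_zero fun γ _ => ?_
  -- Row `j` of `A` is a unit vector, so only `β = j` can contribute.
  by_cases hβ : j = β
  · subst hβ
    rcases lt_or_ge j α with h | h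
    · simp [hC α j γ h]
    · have hle : (α : ℕ) ≤ j := h
      -- As `α ≤ j < s`, column `α` of `A` is a unit vector, and `α ≤ j < i` makes its entry zero.
      have hne : i ≠ α := by
        rintro rfl
        omega
      have h0 : A i α = 0 := by
        rw [hA i α (Or.inr (by omega)), if_neg hne]
      simp [h0]
  · have h0 : A j β = 0 := by
      rw [hA j β (Or.inl hjs), if_neg hβ]
    simp [h0]
end

section
/- Let d ≥ 1 and let C ∈ ℝ^{d×d×d} be the core tensor. Suppose G ∈ GL_d*C satisfies G_{ijk} = C_{ijk} for all indices 1 ≤ i,j,k ≤ d with (i = j = k = 1), or (k = 1 and i > 1), or (j = 1 and i > 1). Then G ∈ (I_1 ⊕ GL_{d−1})*C. -/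
/-!
The matrix `A` with `G = A * C` is itself block diagonal. Let `x` be its first row and contract the
core tensor with `x` in the last slot, `M α β = ∑ γ, C α β γ * x γ`, or in the middle slot,
`N α γ = ∑ β, C α β γ * x β`. The hypotheses say that all rows of `A * M * Aᵀ` and `A * N * Aᵀ` except
the first vanish, so `M = u qᵀ` and `N = u pᵀ` with `u` the first column of `A⁻¹`
(`rank_one_of_rows_zero`).

Both contractions are upper triangular. As `N` has diagonal `x` and rank at most one, at most one
coordinate of `x` is nonzero, say `x = c e_a`, and `u` vanishes beyond `a`. If `a` were not the first
index, `0 = M a 0 = u a * q 0` with `u a ≠ 0` would give `q 0 = 0`, contradicting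
`u 0 * q 0 = M 0 0 = 3c ≠ 0`. So `x = c e_0`, and `G 0 0 0 = 1` forces `c ^ 3 = 1`, whence
`c = 1`. Now `u` is a nonzero multiple of `e_0`, and `A u = e_0` makes the rest of the first column of
`A` vanish.
-/

open Matrix BigOperators

/-- If all rows of `A * M * Aᵀ` but the first vanish, then `M` has rank at most one, and its
column space is spanned by the first column of `A⁻¹`. -/
lemma rank_one_of_rows_zero {n : ℕ} (A M : Matrix (Fin (n + 1)) (Fin (n + 1)) ℝ) (hA : IsUnit A)
    (h : ∀ i j, i ≠ 0 → (A * M * Aᵀ) i j = 0) :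
    ∃ q : Fin (n + 1) → ℝ, ∀ α β, M α β = A⁻¹ α 0 * q β := by
  have hdet : IsUnit A.det := (Matrix.isUnit_iff_isUnit_det A).1 hA
  have hdet' : IsUnit Aᵀ.det := by rwa [Matrix.det_transpose]
  refine ⟨fun β => ((A * M * Aᵀ) * Aᵀ⁻¹) 0 β, fun α β => ?_⟩
  have e : M = A⁻¹ * ((A * M * Aᵀ) * Aᵀ⁻¹) := by
    rw [Matrix.mul_nonsing_inv_cancel_right _ _ hdet', Matrix.nonsing_inv_mul_cancel_left _ _ hdet]
  conv_lhs => rw [e]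
  rw [Matrix.mul_apply]
  refine Finset.sum_eq_single 0 (fun i _ hi => ?_) (by simp)
  rw [Matrix.mul_apply, Finset.sum_eq_zero, mul_zero]
  intro j _
  rw [h i j hi, zero_mul]

lemma congrAct_last_s6 {d : ℕ} (A : Matrix (Fin d) (Fin d) ℝ) (T : Fin d → Fin d → Fin d → ℝ)
    (i j k : Fin d) :
    congrAct A T i j k =
      (A * (Matrix.of fun α β => ∑ γ, T α β γ * A k γ) * Aᵀ) i j := by
  simp only [congrAct, Matrix.mul_apply, Matrix.of_apply, Matrix.transpose_apply,
    Finset.sum_mul, Finset.mul_sum]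
  rw [Finset.sum_comm]
  refine Finset.sum_congr rfl fun β _ => Finset.sum_congr rfl fun α _ =>
    Finset.sum_congr rfl fun γ _ => by ring

lemma congrAct_middle {d : ℕ} (A : Matrix (Fin d) (Fin d) ℝ) (T : Fin d → Fin d → Fin d → ℝ)
    (i j k : Fin d) :
    congrAct A T i j k =
      (A * (Matrix.of fun α γ => ∑ β, T α β γ * A j β) * Aᵀ) i k := by
  rw [← congrAct_last_s6 A (fun α γ β => T α β γ) i k j]
  simp only [congrAct]
  refine Finset.sum_congr rfl fun α _ => ?_
  rw [Finset.sum_comm]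
  refine Finset.sum_congr rfl fun β _ => Finset.sum_congr rfl fun γ _ => by ring

theorem stmt6 (d : ℕ) (hd : 1 ≤ d) (G : Fin d → Fin d → Fin d → ℝ)
    (hG : ∃ A : Matrix (Fin d) (Fin d) ℝ, IsUnit A ∧ G = congrAct A (coreTensor d))
    (hcond : ∀ i j k : Fin d,
      (((i : ℕ) = 0 ∧ (j : ℕ) = 0 ∧ (k : ℕ) = 0) ∨
       ((k : ℕ) = 0 ∧ 0 < (i : ℕ)) ∨
       ((j : ℕ) = 0 ∧ 0 < (i : ℕ))) →
      G i j k = coreTensor d i j k) :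
    ∃ A : Matrix (Fin d) (Fin d) ℝ,
      IsBlockIdGL d 1 A ∧ G = congrAct A (coreTensor d) := by
  obtain ⟨A, hA, rfl⟩ := hG
  obtain ⟨n, rfl⟩ : ∃ n, d = n + 1 := ⟨d - 1, by omega⟩
  have hdet : IsUnit A.det := (Matrix.isUnit_iff_isUnit_det A).1 hA
  have pos_of_ne : ∀ i : Fin (n + 1), i ≠ 0 → 0 < (i : ℕ) := fun i hi =>
    Nat.pos_of_ne_zero fun h => hi (Fin.ext h)
  -- The core tensor vanishes unless its indices increase weakly.
  have C_mid : ∀ a b c : Fin (n + 1), b < a → coreTensor (n + 1) a b c = 0 := by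
    intro a b c h
    simp only [coreTensor]
    rw [if_neg (by omega), if_neg (by omega), if_neg (by omega)]
  have C_last : ∀ a b c : Fin (n + 1), c < a → coreTensor (n + 1) a b c = 0 := by
    intro a b c h
    simp only [coreTensor]
    rw [if_neg (by omega), if_neg (by omega), if_neg (by omega)]
  have C_diag : ∀ a b : Fin (n + 1), coreTensor (n + 1) a b a = if b = a then 1 else 0 := by
    intro a b
    simp only [coreTensor]
    by_cases h : b = a
    · simp [h]
    · rw [if_neg (by omega), if_neg (by omega), if_neg (by omega), if_neg h]
  obtain ⟨q, hq⟩ := rank_one_of_rows_zero A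
      (Matrix.of fun α β => ∑ γ, coreTensor (n + 1) α β γ * A 0 γ) hA (by
    intro i j hi
    rw [← congrAct_last_s6, hcond i j 0 (Or.inr (Or.inl ⟨rfl, pos_of_ne i hi⟩))]
    exact C_last i j 0 (pos_of_ne i hi))
  obtain ⟨p, hp⟩ := rank_one_of_rows_zero A
      (Matrix.of fun α γ => ∑ β, coreTensor (n + 1) α β γ * A 0 β) hA (by
    intro i k hi
    rw [← congrAct_middle, hcond i 0 k (Or.inr (Or.inr ⟨rfl, pos_of_ne i hi⟩))]
    exact C_mid i 0 k (pos_of_ne i hi))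
  simp only [Matrix.of_apply] at hp hq
  have hp_diag : ∀ a, A 0 a = A⁻¹ a 0 * p a := by
    intro a
    rw [← hp a a]
    simp [C_diag]
  have hp_low : ∀ a b, a < b → A⁻¹ b 0 * p a = 0 := by
    intro a b hab
    rw [← hp b a]
    exact Finset.sum_eq_zero fun γ _ => by rw [C_last b γ a hab, zero_mul]
  have hq_low : ∀ a b, a < b → A⁻¹ b 0 * q a = 0 := by
    intro a b hab
    rw [← hq b a]
    exact Finset.sum_eq_zero fun γ _ => by rw [C_mid b a γ hab, zero_mul]
  have hAu : ∀ i, ∑ α, A i α * A⁻¹ α 0 = if i = 0 then 1 else 0 := by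
    intro i
    rw [← Matrix.mul_apply, Matrix.mul_nonsing_inv _ hdet, Matrix.one_apply]
  have hxne : ∃ a, A 0 a ≠ 0 := by
    by_contra! h
    have := hAu 0
    simp [h] at this
  obtain ⟨a, ha⟩ := hxne
  have hpa : p a ≠ 0 := fun h => ha (by rw [hp_diag, h, mul_zero])
  have hua : A⁻¹ a 0 ≠ 0 := fun h => ha (by rw [hp_diag, h, zero_mul])
  have hu : ∀ b, a < b → A⁻¹ b 0 = 0 := fun b hb =>
    (mul_eq_zero.1 (hp_low a b hb)).resolve_right hpa
  have hx : ∀ b, b ≠ a → A 0 b = 0 := by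
    intro b hb
    rcases lt_or_gt_of_ne hb with h | h
    · have : p b = 0 := (mul_eq_zero.1 (hp_low b a h)).resolve_left hua
      rw [hp_diag, this, mul_zero]
    · rw [hp_diag, hu b h, zero_mul]
  have ha0 : a = 0 := by
    by_contra hne
    have h0a : (0 : Fin (n + 1)) < a := Fin.pos_iff_ne_zero.2 hne
    have hq0 : q 0 = 0 := (mul_eq_zero.1 (hq_low 0 a h0a)).resolve_left hua
    have h := hq 0 0
    rw [hq0, mul_zero,
      Finset.sum_eq_single a (fun γ _ hγ => by rw [hx γ hγ, mul_zero]) (by simp)] at h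
    have hC : coreTensor (n + 1) 0 0 a = 3 := by
      simp [coreTensor, Ne.symm hne, h0a]
    rw [hC] at h
    exact ha (by linarith)
  subst ha0
  have hc : A 0 0 = 1 := by
    have h := hcond 0 0 0 (Or.inl ⟨rfl, rfl, rfl⟩)
    have hC : coreTensor (n + 1) 0 0 0 = 1 := by simp [coreTensor]
    have e : congrAct A (coreTensor (n + 1)) 0 0 0 = A 0 0 * A 0 0 * A 0 0 := by
      unfold congrAct
      rw [Finset.sum_eq_single 0 (fun α _ h => by simp [hx α h]) (by simp),
        Finset.sum_eq_single 0 (fun α _ h => by simp [hx α h]) (by simp),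
        Finset.sum_eq_single 0 (fun α _ h => by simp [hx α h]) (by simp), hC, one_mul]
    rw [e, hC] at h
    nlinarith [sq_nonneg (A 0 0 + 1), sq_nonneg (A 0 0),
      mul_self_nonneg (A 0 0 - 1),
      (by ring : A 0 0 * A 0 0 * A 0 0 - 1 = (A 0 0 - 1) * (A 0 0 ^ 2 + A 0 0 + 1))]
  have hcol : ∀ i, i ≠ 0 → A i 0 = 0 := by
    intro i hi
    have h := hAu i
    rw [if_neg hi, Finset.sum_eq_single 0
      (fun α _ h => by rw [hu α (Fin.pos_iff_ne_zero.2 h), mul_zero]) (by simp)] at h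
    exact (mul_eq_zero.1 h).resolve_right hua
  refine ⟨A, ⟨hA, fun i j hij => ?_⟩, rfl⟩
  rcases hij with h | h
  · obtain rfl : i = 0 := Fin.ext (by simpa using h)
    by_cases hj : 0 = j
    · subst hj; simpa using hc
    · rw [if_neg hj, hx j (Ne.symm hj)]
  · obtain rfl : j = 0 := Fin.ext (by simpa using h)
    by_cases hi : i = 0
    · subst hi; simpa using hc
    · rw [if_neg hi, hcol i hi]
end

section
/- Let d ≥ 1, let C ∈ ℝ^{d×d×d} be the core tensor, let A ∈ ℝ^{d×d}, and set G = A*C. Then for every 1 ≤ i ≤ d, G_{iii} = (A_{i1} + A_{i2} + ⋯ + A_{id})^3, i.e., the (i,i,i) diagonal entry of G equals the cube of the i-th row sum of A. -/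
/-!
The cube of the row sum is `∑ α β γ, x α * x β * x γ`, whose summand is symmetric in the indices.
Hence the weight `coreTensor` may be replaced by its average over the six permutations of
`(α, β, γ)`, and by `coreTensor_symm` this average is identically `1`.
-/

open Matrix BigOperators

/-- Summing the core tensor over all reorderings of its indices gives the constant tensor `6`:
a sorted triple with `m` distinct reorderings has entry `m`, each reordering arises from `6 / m`
permutations, and unsorted triples have entry `0`. -/
lemma coreTensor_symm (d : ℕ) (a b c : Fin d) :
    coreTensor d a b c + coreTensor d a c b + coreTensor d b a c + coreTensor d b c a
      + coreTensor d c a b + coreTensor d c b a = 6 := by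
  unfold coreTensor
  rcases lt_trichotomy a b with h | h | h <;> rcases lt_trichotomy b c with h' | h' | h' <;>
    rcases lt_trichotomy a c with h'' | h'' | h'' <;>
    grind

theorem stmt7 (d : ℕ) (hd : 1 ≤ d) (A : Matrix (Fin d) (Fin d) ℝ) (i : Fin d) :
    congrAct A (coreTensor d) i i i = (∑ α, A i α) ^ 3 := by
  set x : Fin d → ℝ := fun α => A i α with hx
  set F : Fin d → Fin d → Fin d → ℝ :=
    fun a b c => coreTensor d a b c * x a * x b * x c with hF
  have swap12 (f : Fin d → Fin d → Fin d → ℝ) :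
      ∑ a, ∑ b, ∑ c, f a b c = ∑ a, ∑ b, ∑ c, f b a c := Finset.sum_comm
  have swap23 (f : Fin d → Fin d → Fin d → ℝ) :
      ∑ a, ∑ b, ∑ c, f a b c = ∑ a, ∑ b, ∑ c, f a c b :=
    Finset.sum_congr rfl fun _ _ => Finset.sum_comm
  have h1 := swap23 F
  have h2 := swap12 F
  have h3 := h1.trans (swap12 fun a b c => F a c b)
  have h4 := h2.trans (swap23 fun a b c => F b a c)
  have h5 := h3.trans (swap23 fun a b c => F b c a)
  have key : ∑ a, ∑ b, ∑ c, (F a b c + F a c b + F b a c + F b c a + F c a b + F c b a)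
      = 6 * (∑ α, x α) ^ 3 := by
    have hcube : (∑ α, x α) ^ 3 = ∑ a, ∑ b, ∑ c, x a * x b * x c := by
      rw [pow_three', Finset.sum_mul_sum, Finset.sum_mul]
      simp only [Finset.sum_mul_sum]
    rw [hcube]
    simp only [Finset.mul_sum]
    refine Finset.sum_congr rfl fun a _ => Finset.sum_congr rfl fun b _ =>
      Finset.sum_congr rfl fun c _ => ?_
    rw [← coreTensor_symm d a b c]
    simp only [hF]
    ring
  simp only [Finset.sum_add_distrib] at key
  change ∑ a, ∑ b, ∑ c, F a b c = (∑ α, x α) ^ 3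
  linarith
end

section
/- Let d ≥ 1, let C ∈ ℝ^{d×d×d} be the core tensor, and let G ∈ GL_d*C. Then there exists an index 1 ≤ i ≤ d such that G_{iii} ≠ 0. -/
/-!
The diagonal entry `G i i i` of `A * C` is the cubic form of `C` evaluated at row `i` of `A`.
Averaging `C` over the six permutations of its indices gives the all-ones tensor
(`coreTensor_symm_sum`), so this cubic form is `(∑ α, A i α) ^ 3` (`coreTensor_cubic`).
If every diagonal entry vanished, all row sums of `A` would be zero, i.e. the nonzero all-ones
vector would lie in the kernel of the invertible matrix `A`.
-/

open Matrix BigOperators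

lemma coreTensor_symm_sum {d : ℕ} (i j k : Fin d) :
    coreTensor d i j k + coreTensor d i k j + coreTensor d j i k + coreTensor d j k i
      + coreTensor d k i j + coreTensor d k j i = 6 := by
  unfold coreTensor
  rcases lt_trichotomy i j with h | h | h <;> rcases lt_trichotomy j k with h' | h' | h' <;>
    rcases lt_trichotomy i k with h'' | h'' | h'' <;>
    first
    | (exfalso; omega)
    | (subst_vars
       simp_all [ne_of_lt, ne_of_gt, not_lt_of_gt]
       try norm_num)

/-- The cubic form of the core tensor is the cube of the coordinate sum. -/
lemma coreTensor_cubic {d : ℕ} (x : Fin d → ℝ) :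
    ∑ α, ∑ β, ∑ γ, coreTensor d α β γ * x α * x β * x γ = (∑ α, x α) ^ 3 := by
  set f : Fin d → Fin d → Fin d → ℝ := fun α β γ => coreTensor d α β γ * x α * x β * x γ with hf
  -- The total sum of `f` is unchanged by swapping the last two or the first two indices;
  -- these two transpositions generate all six permutations.
  have swap₂₃ : ∀ g : Fin d → Fin d → Fin d → ℝ,
      ∑ α, ∑ β, ∑ γ, g α γ β = ∑ α, ∑ β, ∑ γ, g α β γ :=
    fun g => Finset.sum_congr rfl fun α _ => Finset.sum_comm
  have swap₁₂ : ∀ g : Fin d → Fin d → Fin d → ℝ,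
      ∑ α, ∑ β, ∑ γ, g β α γ = ∑ α, ∑ β, ∑ γ, g α β γ :=
    fun g => Finset.sum_comm
  have h1 := swap₂₃ f
  have h2 := swap₁₂ f
  have h3 := swap₁₂ fun α β γ => f α γ β
  have h4 := swap₂₃ fun α β γ => f β α γ
  have h5 := swap₂₃ fun α β γ => f β γ α
  have key : ∑ α, ∑ β, ∑ γ, (f α β γ + f α γ β + f β α γ + f β γ α + f γ α β + f γ β α)
      = 6 * (∑ α, x α) ^ 3 := by
    have : ∀ α β γ, f α β γ + f α γ β + f β α γ + f β γ α + f γ α β + f γ β α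
        = 6 * (x α * (x β * x γ)) := fun α β γ => by
      rw [← coreTensor_symm_sum α β γ]
      simp only [hf]
      ring
    simp only [this, ← Finset.mul_sum, ← Finset.sum_mul]
    ring
  simp only [Finset.sum_add_distrib] at key
  change ∑ α, ∑ β, ∑ γ, f α β γ = _
  linarith

theorem stmt8 (d : ℕ) (hd : 1 ≤ d) (G : Fin d → Fin d → Fin d → ℝ)
    (hG : ∃ A : Matrix (Fin d) (Fin d) ℝ, IsUnit A ∧ G = congrAct A (coreTensor d)) :
    ∃ i : Fin d, G i i i ≠ 0 := by
  obtain ⟨A, hA, rfl⟩ := hG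
  by_contra! h
  have hrow : A *ᵥ (fun _ => 1) = A *ᵥ 0 := by
    ext i
    have hi : (∑ α, A i α) ^ 3 = 0 := by
      rw [← coreTensor_cubic]
      exact h i
    simpa [Matrix.mulVec, dotProduct] using hi
  have hone := Matrix.mulVec_injective_of_isUnit hA hrow
  exact one_ne_zero (congrFun hone ⟨0, hd⟩)
end

section
/- Let d ≥ 1, 1 ≤ s < d, x ∈ ℝ^{d−s}, and let G ∈ ℝ^{d×d×d} be any tensor. Set H := U^{(s,x)} * G under the congruence action. Then for all indices 1 ≤ i,j ≤ d with i ≠ s and j ≠ s, one has H_{ijs} − H_{jis} = G_{ijs} − G_{jis} + Σ_{γ=s+1}^d (G_{ijγ} − G_{jiγ}) x_{γ−s}. -/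
/-! A row `i ≠ p` of the upper Gauss matrix is the standard basis row, so in the slots `i, j ≠ p`
the congruence action does nothing; only row `p`, acting on the third slot, contributes.
Antisymmetrising the resulting formula `congrAct_upperGauss_apply` in `i, j` gives the claim. -/

open Matrix BigOperators

/-- The upper Gauss matrix `U^{(p,x)} = I_d + Σ_{γ > p} x_γ E_{pγ}`
(with the entries of `x` indexed by the column `γ > p` where they are placed). -/
def upperGauss (d : ℕ) (p : Fin d) (x : Fin d → ℝ) : Matrix (Fin d) (Fin d) ℝ :=
  Matrix.of fun i j =>
    (if i = j then 1 else 0) + (if i = p ∧ p < j then x j else 0)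

lemma congrAct_upperGauss_apply {d : ℕ} (p : Fin d) (x : Fin d → ℝ)
    (G : Fin d → Fin d → Fin d → ℝ) {i j : Fin d} (hi : i ≠ p) (hj : j ≠ p) :
    congrAct (upperGauss d p x) G i j p =
      G i j p + ∑ γ ∈ Finset.univ.filter (fun γ : Fin d => p < γ), G i j γ * x γ := by
  unfold congrAct
  rw [Finset.sum_eq_single i, Finset.sum_eq_single j]
  · simp [upperGauss, hi, hj, mul_add, Finset.sum_add_distrib, Finset.sum_filter]
  · intro β _ hβ
    simp [upperGauss, hj, hβ.symm]
  · simp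
  · intro α _ hα
    simp [upperGauss, hi, hα.symm]
  · simp

theorem stmt10 (d : ℕ) (p : Fin d) (hp : (p : ℕ) + 1 < d)
    (x : Fin d → ℝ) (G : Fin d → Fin d → Fin d → ℝ)
    (H : Fin d → Fin d → Fin d → ℝ) (hH : H = congrAct (upperGauss d p x) G) :
    ∀ i j : Fin d, i ≠ p → j ≠ p →
      H i j p - H j i p =
        G i j p - G j i p +
          ∑ γ ∈ Finset.univ.filter (fun γ : Fin d => p < γ),
            (G i j γ - G j i γ) * x γ := by
  intro i j hi hj
  rw [hH, congrAct_upperGauss_apply p x G hi hj, congrAct_upperGauss_apply p x G hj hi]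
  simp only [sub_mul, Finset.sum_sub_distrib]
  ring
end

section
/- Let d = 2, let C ∈ ℝ^{2×2×2} be the core tensor, and let G ∈ GL_2*C. Define H ∈ ℝ^{2×2×2} as follows: if G_{122} ≠ G_{212}, set H := U^{(1,x)} * G where x = (G_{211} − G_{121})/(G_{122} − G_{212}) ∈ ℝ; otherwise set H := P^{(1,2)} * G, where P^{(1,2)} is the 2×2 permutation matrix swapping indices 1 and 2. Then H satisfies: H_{111} ≠ 0, H_{121} = H_{211}, H_{121} H_{211} = H_{111} H_{221}, and H_{112} H_{121} = H_{212} H_{111}. -/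
/-!
All indices below are 0-based. Contracting the core tensor for `d = 2` with vectors `u, v, w`
gives the trilinear form `u₀v₀w₀ + u₁v₁w₁ + 3u₀v₁w₁ + 3u₀v₀w₁`, and exchanging `u` and `v`
changes it by `3(u₀v₁ - u₁v₀)w₁`. Hence `G = A * C` has `G₀₁₁ - G₁₀₁ = 3 det(A) A₁₁` and
`G₁₀₀ - G₀₁₀ = -3 det(A) A₀₁`. If `A₁₁ ≠ 0` then `x = -A₀₁ / A₁₁` and `U A` is lower triangular;
if `A₁₁ = 0`, swapping the rows of `A` makes it lower triangular. In both cases `H = B * C`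
(`congrAct_congrAct`) with `B` lower triangular and `B₀₀ ≠ 0`, and for such `B` the four
relations are immediate (`relations_of_lowerTriangular`).
-/

open Matrix BigOperators

/-- The `2 × 2 × 2` core tensor contracted with three rows of `A`. -/
lemma congrAct_core_two (A : Matrix (Fin 2) (Fin 2) ℝ) (i j k : Fin 2) :
    congrAct A (coreTensor 2) i j k =
      A i 0 * A j 0 * A k 0 + A i 1 * A j 1 * A k 1
        + 3 * A i 0 * A j 1 * A k 1 + 3 * A i 0 * A j 0 * A k 1 := by
  simp [congrAct, coreTensor, Fin.sum_univ_two]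
  ring

lemma congrAct_congrAct (B A : Matrix (Fin 2) (Fin 2) ℝ) (T : Fin 2 → Fin 2 → Fin 2 → ℝ) :
    congrAct B (congrAct A T) = congrAct (B * A) T := by
  funext i j k
  simp only [congrAct, Fin.sum_univ_two, Matrix.mul_apply]
  ring

lemma relations_of_lowerTriangular (B : Matrix (Fin 2) (Fin 2) ℝ)
    (h0 : B 0 0 ≠ 0) (h1 : B 0 1 = 0) (H : Fin 2 → Fin 2 → Fin 2 → ℝ)
    (hH : H = congrAct B (coreTensor 2)) :
    H 0 0 0 ≠ 0 ∧ H 0 1 0 = H 1 0 0 ∧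
      H 0 1 0 * H 1 0 0 = H 0 0 0 * H 1 1 0 ∧
      H 0 0 1 * H 0 1 0 = H 1 0 1 * H 0 0 0 := by
  subst hH
  simp only [congrAct_core_two, h1]
  refine ⟨?_, by ring, by ring, by ring⟩
  simpa using h0

theorem stmt12 (G : Fin 2 → Fin 2 → Fin 2 → ℝ)
    (hG : ∃ A : Matrix (Fin 2) (Fin 2) ℝ, IsUnit A ∧ G = congrAct A (coreTensor 2))
    (H : Fin 2 → Fin 2 → Fin 2 → ℝ)
    (hH : H = if G 0 1 1 ≠ G 1 0 1 then
        congrAct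
          (upperGauss 2 0 fun _ => (G 1 0 0 - G 0 1 0) / (G 0 1 1 - G 1 0 1)) G
      else congrAct (!![0, 1; 1, 0] : Matrix (Fin 2) (Fin 2) ℝ) G) :
    H 0 0 0 ≠ 0 ∧ H 0 1 0 = H 1 0 0 ∧
      H 0 1 0 * H 1 0 0 = H 0 0 0 * H 1 1 0 ∧
      H 0 0 1 * H 0 1 0 = H 1 0 1 * H 0 0 0 := by
  obtain ⟨A, hA, rfl⟩ := hG
  have hdet : A 0 0 * A 1 1 - A 0 1 * A 1 0 ≠ 0 := by
    rw [← Matrix.det_fin_two]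
    exact ((Matrix.isUnit_iff_isUnit_det A).1 hA).ne_zero
  have hden : congrAct A (coreTensor 2) 0 1 1 - congrAct A (coreTensor 2) 1 0 1
      = 3 * (A 0 0 * A 1 1 - A 0 1 * A 1 0) * A 1 1 := by
    simp only [congrAct_core_two]; ring
  have hnum : congrAct A (coreTensor 2) 1 0 0 - congrAct A (coreTensor 2) 0 1 0
      = 3 * (A 0 0 * A 1 1 - A 0 1 * A 1 0) * (-A 0 1) := by
    simp only [congrAct_core_two]; ring
  have h3det : 3 * (A 0 0 * A 1 1 - A 0 1 * A 1 0) ≠ 0 := mul_ne_zero three_ne_zero hdet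
  rw [hnum, hden, mul_div_mul_left _ _ h3det, congrAct_congrAct, congrAct_congrAct] at hH
  split_ifs at hH with h
  · have he : A 1 1 ≠ 0 := by
      rw [← sub_ne_zero, hden] at h
      exact right_ne_zero_of_mul h
    refine relations_of_lowerTriangular _ ?_ ?_ H hH
    · -- The new corner entry is `det A / A₁₁` (0-based indices).
      have h00 : (upperGauss 2 0 (fun _ => -A 0 1 / A 1 1) * A) 0 0
          = (A 0 0 * A 1 1 - A 0 1 * A 1 0) / A 1 1 := by
        simp [upperGauss, Matrix.mul_apply, Fin.sum_univ_two]
        field_simp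
        ring
      rw [h00]
      exact div_ne_zero hdet he
    · simp [upperGauss, Matrix.mul_apply, Fin.sum_univ_two]
      field_simp
      ring
  · have he : A 1 1 = 0 := by
      rw [not_not, ← sub_eq_zero, hden] at h
      exact (mul_eq_zero.1 h).resolve_left h3det
    refine relations_of_lowerTriangular _ ?_ ?_ H hH
    · intro hc
      simp [Matrix.mul_apply, Fin.sum_univ_two] at hc
      simp [he, hc] at hdet
    · simp [Matrix.mul_apply, Fin.sum_univ_two, he]
end

section
/- Let C ∈ ℝ^{2×2×2} be the core tensor in dimension d = 2, let A ∈ GL_2 be an invertible 2×2 real matrix, and set G = A*C. Then G_{122} = G_{212} if and only if A_{22} = 0. -/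
open Matrix BigOperators

theorem stmt13 (A : Matrix (Fin 2) (Fin 2) ℝ) (hA : IsUnit A)
    (G : Fin 2 → Fin 2 → Fin 2 → ℝ) (hG : G = congrAct A (coreTensor 2)) :
    G 0 1 1 = G 1 0 1 ↔ A 1 1 = 0 := by
  subst hG
  have hdet : A.det ≠ 0 := ((Matrix.isUnit_iff_isUnit_det A).mp hA).ne_zero
  -- Only `C₁₂₂ = 3` and `C₂₁₂ = 0` break the symmetry in the first two slots, so the
  -- difference of the two entries antisymmetrizes to a determinant.
  have key : congrAct A (coreTensor 2) 0 1 1 - congrAct A (coreTensor 2) 1 0 1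
      = 3 * A.det * A 1 1 := by
    simp [congrAct, coreTensor, Fin.sum_univ_two, Matrix.det_fin_two]
    ring
  rw [← sub_eq_zero, key]
  simp [hdet]
end

section
/- Let d ≥ 4 and 1 ≤ s < d−2, and let C ∈ ℝ^{d×d×d} be the core tensor. For A ∈ ℝ^{d×d} let G(A) := A*C and let M(A) ∈ ℝ^{(d−s)^2 × (d−s)} be the matrix with entries M(A)_{(a−1)(d−s)+b, γ} = G(A)_{a+s,b+s,γ+s} − G(A)_{b+s,a+s,γ+s} for 1 ≤ a,b,γ ≤ d−s. Then the set {A ∈ ℝ^{d×d} : rank(M(A)) < d−s}, i.e., the set of matrices A for which M(A) fails to have full column rank, has Lebesgue measure zero in ℝ^{d×d} ≅ ℝ^{d²}. -/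
/-!
The condition `rank M(A) < d - s` is `det (M(A)ᵀ M(A)) = 0`, the vanishing of a polynomial in the
entries of `A`. A polynomial that is nonzero at one point has a null zero set
(`volume_zeros_eq_zero`), so it is enough to exhibit one `A` for which `M(A)` is injective.

Contracting the core tensor with `w` in its last slot and antisymmetrising in the first two gives
the 2-form `∑_β κ_β(w) (x_0 + ⋯ + x_{β-1}) ∧ x_β`, where `κ_β(w) = 3 w_β + 6 ∑_{γ > β} w_γ`
(`skew_eq`). In the partial sums `y_β = x_0 + ⋯ + x_β` it becomes `∑_β κ_β(w) y_{β-1} ∧ y_β`.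
`M(A) v = 0` says that this form, for `w = ∑_γ v_γ A_{γ+s}`, vanishes on the span of the rows of `A`
with index at least `s` (`Mmat_mulVec`). The `witness` makes this span the subspace
`y_{s-1} = 2 y_{d-1}` of the space with coordinates `y_{s-1}, …, y_{d-1}`. There the terms
`y_{β-1} ∧ y_β` for `s ≤ β ≤ d - 1` form a cycle of length `d - s ≥ 3`, so they are linearly
independent and all `κ_β(w)` with `β ≥ s` vanish (`skew_consecutive`, `skew_closing`). By
triangularity `w_β = 0` for `β ≥ s`, that is, `y_{s-1} = y_s = ⋯ = y_{d-1}`; together with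
`y_{s-1} = 2 y_{d-1}` this gives `w = 0` and `v = 0` (`witness_injective`).
-/


open Matrix BigOperators

/-- The (0-based) index `a + s` of `Fin d`, for `a : Fin (d - s)`;
this corresponds to the 1-based index `a + s` with `1 ≤ a ≤ d - s`. -/
def emb {d s : ℕ} (h : s ≤ d) (a : Fin (d - s)) : Fin d :=
  ⟨(a : ℕ) + s, by have := a.isLt; omega⟩

/-- The matrix `M ∈ ℝ^{(d-s)² × (d-s)}` with entries
`M_{(a,b),γ} = G_{a+s,b+s,γ+s} − G_{b+s,a+s,γ+s}` (1-based indexing in the paper,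
rows indexed here by pairs `(a,b)`). -/
def Mmat (d s : ℕ) (h : s ≤ d) (G : Fin d → Fin d → Fin d → ℝ) :
    Matrix (Fin (d - s) × Fin (d - s)) (Fin (d - s)) ℝ :=
  Matrix.of fun ab γ =>
    G (emb h ab.1) (emb h ab.2) (emb h γ) - G (emb h ab.2) (emb h ab.1) (emb h γ)

open MeasureTheory
open scoped ContDiff

/-! ### Zero sets of real-analytic functions -/

/-- The zero set of a real-analytic function that is nonzero at some point `x₀` is null. On every
line through `x₀` the zeros are isolated, so by Fubini for almost every `t` the set of `x` with
`f (x₀ + t • x) = 0` is null; any such `t ≠ 0` suffices, by the scaling of Lebesgue measure. -/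
theorem volume_zeros_eq_zero {d : ℕ} (f : (Fin d → Fin d → ℝ) → ℝ) (hf : ContDiff ℝ ω f)
    (x₀ : Fin d → Fin d → ℝ) (h₀ : f x₀ ≠ 0) : volume {x | f x = 0} = 0 := by
  have hZ : MeasurableSet {p : (Fin d → Fin d → ℝ) × ℝ | f (x₀ + p.2 • p.1) ≠ 0} := by
    have : Continuous fun p : (Fin d → Fin d → ℝ) × ℝ => f (x₀ + p.2 • p.1) :=
      hf.continuous.comp (by fun_prop)
    exact (isOpen_ne.preimage this).measurableSet
  have hline : ∀ x : Fin d → Fin d → ℝ, ∀ᵐ t : ℝ, f (x₀ + t • x) ≠ 0 := by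
    intro x
    have hg : ContDiff ℝ ω fun t : ℝ => f (x₀ + t • x) := hf.comp (by fun_prop)
    have hco := (contDiff_omega_iff_analyticOnNhd.1 hg).preimage_zero_mem_codiscrete (x := 0)
      (by simpa using h₀)
    have hae := ae_restrict_le_codiscreteWithin (μ := (volume : Measure ℝ)) MeasurableSet.univ hco
    rw [Measure.restrict_univ] at hae
    filter_upwards [hae] with t ht
    simpa using ht
  have hswap : ∀ᵐ t : ℝ, ∀ᵐ x : Fin d → Fin d → ℝ, f (x₀ + t • x) ≠ 0 :=
    (Measure.ae_ae_comm (p := fun (x : Fin d → Fin d → ℝ) (t : ℝ) => f (x₀ + t • x) ≠ 0) hZ).1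
      (Filter.Eventually.of_forall hline)
  obtain ⟨t, ht, ht0⟩ := (hswap.and (Measure.ae_ne volume (0 : ℝ))).exists
  have hpre : volume ((fun x => t • x) ⁻¹' ((fun x => x₀ + x) ⁻¹' {x | f x = 0})) = 0 := by
    simpa [ae_iff] using ht
  rw [Measure.addHaar_preimage_smul _ ht0, measure_preimage_add] at hpre
  simpa [ht0] using hpre

/-! ### The skew form of the core tensor -/

/-- The linear form `w ↦ 3 w_β + 6 ∑_{γ > β} w_γ`, which is `∑_γ C_{αβγ} w_γ` for every `α < β`. -/
noncomputable def kap {d : ℕ} (w : Fin d → ℝ) (β : Fin d) : ℝ :=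
  ∑ γ, (if γ = β then 3 else if β < γ then 6 else 0) * w γ

/-- The skew-symmetric matrix `∑_γ (C_{αβγ} - C_{βαγ}) w_γ` in closed form. -/
noncomputable def skew {d : ℕ} (w : Fin d → ℝ) : Matrix (Fin d) (Fin d) ℝ :=
  Matrix.of fun α β => if α < β then kap w β else if β < α then -kap w α else 0

theorem skew_eq {d : ℕ} (w : Fin d → ℝ) (α β : Fin d) :
    ∑ γ, (coreTensor d α β γ - coreTensor d β α γ) * w γ = skew w α β := by
  simp only [skew, Matrix.of_apply, kap]
  rcases lt_trichotomy α β with h | h | h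
  · rw [if_pos h]
    refine Finset.sum_congr rfl fun γ _ => ?_
    congr 1
    unfold coreTensor
    grind
  · subst h
    simp
  · rw [if_neg h.not_gt, if_pos h, ← Finset.sum_neg_distrib]
    refine Finset.sum_congr rfl fun γ _ => ?_
    rw [← neg_mul]
    congr 1
    unfold coreTensor
    grind

/-- Applying `M(A)` to `v` evaluates the skew form attached to `w = ∑_γ v_γ A_{γ+s}` on pairs of
rows of `A`. -/
theorem Mmat_mulVec {d s : ℕ} (h : s ≤ d) (A : Fin d → Fin d → ℝ) (v : Fin (d - s) → ℝ)
    (a b : Fin (d - s)) :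
    (Mmat d s h (congrAct (Matrix.of A) (coreTensor d)) *ᵥ v) (a, b) =
      A (emb h a) ⬝ᵥ (skew (fun c => ∑ γ, v γ * A (emb h γ) c) *ᵥ A (emb h b)) := by
  have hM : ∀ γ, Mmat d s h (congrAct (Matrix.of A) (coreTensor d)) (a, b) γ =
      ∑ α, ∑ β, ∑ c, (coreTensor d α β c - coreTensor d β α c) *
        (A (emb h a) α * A (emb h b) β * A (emb h γ) c) := by
    intro γ
    simp only [Mmat, congrAct, Matrix.of_apply]
    rw [Finset.sum_comm (f := fun α β => ∑ c, coreTensor d α β c * A (emb h b) α *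
      A (emb h a) β * A (emb h γ) c)]
    simp only [← Finset.sum_sub_distrib]
    refine Finset.sum_congr rfl fun α _ => Finset.sum_congr rfl fun β _ =>
      Finset.sum_congr rfl fun c _ => ?_
    ring
  simp only [Matrix.mulVec, dotProduct, hM, ← skew_eq, Finset.sum_mul, Finset.mul_sum]
  rw [Finset.sum_comm]
  refine Finset.sum_congr rfl fun α _ => ?_
  rw [Finset.sum_comm]
  refine Finset.sum_congr rfl fun β _ => ?_
  rw [Finset.sum_comm]
  refine Finset.sum_congr rfl fun c _ => Finset.sum_congr rfl fun γ _ => ?_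
  ring

/-- The linear forms `kap w β` are triangular: their vanishing for all `β ≥ s` forces `w_β = 0`
for all `β ≥ s`. -/
theorem eq_zero_of_kap {d s : ℕ} (w : Fin d → ℝ) (hw : ∀ β : Fin d, s ≤ β → kap w β = 0)
    (β : Fin d) (hβ : s ≤ β) : w β = 0 := by
  induction hk : d - (β : ℕ) using Nat.strong_induction_on generalizing β with
  | _ k ih =>
    have hgt : ∀ γ : Fin d, β < γ → w γ = 0 := fun γ hγ =>
      ih (d - γ) (by have := γ.isLt; rw [Fin.lt_def] at hγ; omega) γ
        (by rw [Fin.lt_def] at hγ; omega) rfl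
    have h0 := hw β hβ
    rw [kap, Finset.sum_eq_single β] at h0
    · simpa using h0
    · intro γ _ hγ
      by_cases hlt : β < γ
      · simp [hgt γ hlt]
      · simp [hγ, hlt]
    · simp

/-! ### A matrix with `M(A)` of full column rank -/

/-- The witness (0-based indices): row `r < d - 1` is `e_r - e_{r+1}`, and the last row is
`e_{d-1} + 2 e_{s-1} - 2 e_s`. In the partial-sum coordinates `y_β = ∑_{α ≤ β} x_α` these rows with
`r ≥ s` are the basis dual to `y_s, …, y_{d-1}` on the subspace `y_{s-1} = 2 y_{d-1}`
(with vanishing coordinates before `s - 1`). -/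
noncomputable def witness (d s : ℕ) : Fin d → Fin d → ℝ := fun r c =>
  (if (r : ℕ) = c then 1 else 0) - (if (r : ℕ) + 1 = c then 1 else 0) +
    (if (r : ℕ) + 1 = d then
      2 * (if (c : ℕ) + 1 = s then 1 else 0) - 2 * (if (c : ℕ) = s then 1 else 0) else 0)

theorem witness_row {d s : ℕ} (r r' : Fin d) (hr : (r' : ℕ) = r + 1) :
    witness d s r = Pi.single r 1 - Pi.single r' 1 := by
  ext c
  have := r'.isLt
  simp only [witness, Pi.sub_apply, Pi.single_apply, Fin.ext_iff, hr]
  grind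

theorem witness_last {d s : ℕ} (l p q : Fin d) (hl : (l : ℕ) + 1 = d) (hp : (p : ℕ) + 1 = s)
    (hq : (q : ℕ) = s) :
    witness d s l = Pi.single l 1 + (2 : ℝ) • Pi.single p 1 - (2 : ℝ) • Pi.single q 1 := by
  ext c
  have := c.isLt
  simp only [witness, Pi.sub_apply, Pi.add_apply, Pi.smul_apply, Pi.single_apply, Fin.ext_iff,
    smul_eq_mul]
  grind

theorem single_skew_single {d : ℕ} (w : Fin d → ℝ) (α β : Fin d) :
    (Pi.single α 1 : Fin d → ℝ) ⬝ᵥ (skew w *ᵥ Pi.single β 1) = skew w α β := by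
  simp

/-- On consecutive rows of the witness the skew form is `kap w (r + 1)`. -/
theorem skew_consecutive {d s : ℕ} (hs : 1 ≤ s) (hsd : s + 2 < d) (w : Fin d → ℝ)
    (r r' : Fin d) (hr : (r' : ℕ) = r + 1) (hsr : s ≤ r) :
    witness d s r ⬝ᵥ (skew w *ᵥ witness d s r') = kap w r' := by
  rw [witness_row r r' hr]
  by_cases hlast : (r' : ℕ) + 1 = d
  · rw [witness_last r' ⟨s - 1, by omega⟩ ⟨s, by omega⟩ hlast (by simp; omega) rfl]
    simp only [sub_dotProduct, Matrix.mulVec_sub, Matrix.mulVec_add, dotProduct_sub, dotProduct_add,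
      Matrix.mulVec_smul, dotProduct_smul, single_skew_single, smul_eq_mul]
    simp only [skew, Matrix.of_apply, Fin.lt_def]
    grind
  · rw [witness_row r' ⟨r' + 1, by omega⟩ rfl]
    simp only [sub_dotProduct, Matrix.mulVec_sub, dotProduct_sub, single_skew_single]
    simp only [skew, Matrix.of_apply, Fin.lt_def]
    grind

/-- On the last row and row `s` of the witness the skew form is `2 * kap w s`. -/
theorem skew_closing {d s : ℕ} (hs : 1 ≤ s) (hsd : s + 2 < d) (w : Fin d → ℝ)
    (l q : Fin d) (hl : (l : ℕ) + 1 = d) (hq : (q : ℕ) = s) :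
    witness d s l ⬝ᵥ (skew w *ᵥ witness d s q) = 2 * kap w q := by
  rw [witness_last l ⟨s - 1, by omega⟩ q hl (by simp; omega) hq,
    witness_row q ⟨s + 1, by omega⟩ (by simp [hq])]
  simp only [sub_dotProduct, add_dotProduct, smul_dotProduct, Matrix.mulVec_sub, dotProduct_sub,
    single_skew_single, smul_eq_mul]
  simp only [skew, Matrix.of_apply, Fin.lt_def]
  grind

theorem witness_injective {d s : ℕ} (h : s ≤ d) (hs : 1 ≤ s) (hsd : s + 2 < d)
    (v : Fin (d - s) → ℝ)
    (hv : Mmat d s h (congrAct (Matrix.of (witness d s)) (coreTensor d)) *ᵥ v = 0) : v = 0 := by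
  set w : Fin d → ℝ := fun c => ∑ γ, v γ * witness d s (emb h γ) c with hw
  have hF : ∀ a b, witness d s (emb h a) ⬝ᵥ (skew w *ᵥ witness d s (emb h b)) = 0 := by
    intro a b
    rw [hw, ← Mmat_mulVec, hv]
    rfl
  have hkap : ∀ β : Fin d, s ≤ β → kap w β = 0 := by
    intro β hβ
    rcases hβ.eq_or_lt with hβ | hβ
    · have := hF ⟨d - s - 1, by omega⟩ ⟨0, by omega⟩
      rw [skew_closing hs hsd w _ _ (by simp [emb]; omega) (by simp [emb])] at this
      have hq : emb h ⟨0, by omega⟩ = β := by ext; simp [emb, hβ]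
      rw [hq] at this
      linarith
    · have := hF ⟨β - s - 1, by omega⟩ ⟨β - s, by omega⟩
      have hq : emb h ⟨β - s, by omega⟩ = β := by ext; simp [emb]; omega
      rw [hq] at this
      rwa [skew_consecutive hs hsd w _ _ (by simp [emb]; omega) (by simp [emb])] at this
  have hw0 := eq_zero_of_kap w hkap
  -- The coordinates of `w` beyond `s` are successive differences of `v`.
  have hstep : ∀ (j : ℕ) (hj : j + 1 < d - s), v ⟨j + 1, hj⟩ = v ⟨j, by omega⟩ := by
    intro j hj
    have h0 := hw0 ⟨s + j + 1, by omega⟩ (by simp; omega)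
    have hterm : ∀ γ : Fin (d - s), v γ * witness d s (emb h γ) ⟨s + j + 1, by omega⟩ =
        (if γ = ⟨j + 1, hj⟩ then v γ else 0) - (if γ = ⟨j, by omega⟩ then v γ else 0) := by
      intro γ
      simp only [witness, emb, Fin.ext_iff]
      grind
    simp only [hw, hterm, Finset.sum_sub_distrib, Finset.sum_ite_eq', Finset.mem_univ,
      if_true] at h0
    linarith
  have hends : v ⟨0, by omega⟩ = 2 * v ⟨d - s - 1, by omega⟩ := by
    have h0 := hw0 ⟨s, by omega⟩ le_rfl
    have hterm : ∀ γ : Fin (d - s), v γ * witness d s (emb h γ) ⟨s, by omega⟩ =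
        (if γ = ⟨0, by omega⟩ then v γ else 0) -
          (if γ = ⟨d - s - 1, by omega⟩ then 2 * v γ else 0) := by
      intro γ
      simp only [witness, emb, Fin.ext_iff]
      grind
    simp only [hw, hterm, Finset.sum_sub_distrib, Finset.sum_ite_eq', Finset.mem_univ,
      if_true] at h0
    linarith
  have hconst : ∀ (j : ℕ) (hj : j < d - s), v ⟨j, hj⟩ = v ⟨0, by omega⟩ := by
    intro j
    induction j with
    | zero => intro _; rfl
    | succ j ih => intro hj; rw [hstep j hj, ih]
  ext j
  have h1 := hconst (d - s - 1) (by omega)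
  have h2 := hconst j j.isLt
  simp only [Fin.eta] at h2
  rw [h2]
  simp only [Pi.zero_apply]
  linarith

theorem stmt15 (d s : ℕ) (hd : 4 ≤ d) (hs : 1 ≤ s) (hsd : s < d - 2) :
    MeasureTheory.volume
      {A : Fin d → Fin d → ℝ |
        (Mmat d s (by omega) (congrAct (Matrix.of A) (coreTensor d))).rank < d - s}
      = 0 := by
  have h : s ≤ d := by omega
  -- `det (Mᵀ M)` is a polynomial in `A` that detects the failure of full column rank.
  let f : (Fin d → Fin d → ℝ) → ℝ := fun A =>
    ((Mmat d s h (congrAct (Matrix.of A) (coreTensor d)))ᵀ *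
      Mmat d s h (congrAct (Matrix.of A) (coreTensor d))).det
  have hf : ContDiff ℝ ω f := by
    have hG : ∀ i j k, ContDiff ℝ ω fun A : Fin d → Fin d → ℝ =>
        congrAct (Matrix.of A) (coreTensor d) i j k := by
      intro i j k
      simp only [congrAct, Matrix.of_apply]
      fun_prop
    have hM : ∀ p γ, ContDiff ℝ ω fun A : Fin d → Fin d → ℝ =>
        Mmat d s h (congrAct (Matrix.of A) (coreTensor d)) p γ := fun p γ =>
      (hG _ _ _).sub (hG _ _ _)
    simp only [f, Matrix.det_apply, Matrix.mul_apply, Matrix.transpose_apply]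
    exact ContDiff.sum fun σ _ => (contDiff_prod fun i _ => ContDiff.sum fun p _ =>
      (hM _ _).mul (hM _ _)).const_smul _
  have hne : f (witness d s) ≠ 0 := by
    intro h0
    obtain ⟨v, hv0, hv⟩ := Matrix.exists_mulVec_eq_zero_iff.2 h0
    refine hv0 (witness_injective h hs (by omega) v ?_)
    rw [← Matrix.mulVec_mulVec] at hv
    have := congrArg (fun u => v ⬝ᵥ u) hv
    simp only [dotProduct_zero, Matrix.mulVec_transpose] at this
    rw [dotProduct_comm, ← Matrix.dotProduct_mulVec, dotProduct_self_eq_zero] at this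
    exact this
  refine measure_mono_null (fun A hA => ?_) (volume_zeros_eq_zero f hf (witness d s) hne)
  by_contra hdet
  rw [Set.mem_ofPred_eq] at hA
  refine hA.ne ?_
  rw [← Matrix.rank_transpose_mul_self]
  have := Matrix.rank_of_isUnit _ ((Matrix.isUnit_iff_isUnit_det _).2 (isUnit_iff_ne_zero.2 hdet))
  simpa using this
end
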